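/- arXiv:math/9803067 — 2 statements merged into one kernel-verified Lean document; each statement's English description precedes it below -/
import Mathlib

section
/- Let w = (1+i)/2. Then 2·Li₂((1−i)/4) = 3·(Li₂(i/2) − (Log w)²) + 4·Li₂(−i), where (1−i)/4 = −w³ and i/2 = w². (Equivalently, writing Li₂(−i) = −iG − π²/48, this expresses a ladder relation among dilogarithms at eighth roots of 1/16.) -/
/-!
Put `w = (1 + i)/2`, so `1 - w` is the conjugate of `w`, `w (1 - w) = 1/2` and `w / (1 - w) = i`.
The five-term relation of the dilogarithm at `x = -t`, `y = t²` reads, with `D = 1 - t + t²`,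

  `Li₂(-t) + Li₂(t²) - Li₂(-t³)
    = Li₂(-t(1-t)/D) + Li₂(t²/D) - log D (log(1-t) - log D)`.

At `t = w` one has `D = 1/2`, and the two dilogarithms on the right become `Li₂(-1)` and `Li₂(i)`
(`five_term_at_w`). Landen's identity at `w` expresses `Li₂(w)` through `Li₂(-i)` (`landen_at_w`),
and the duplication formula `Li₂(z²) = 2 (Li₂(z) + Li₂(-z))`, used at `w`, `i` and `1`, eliminates
`Li₂(-w)`, `Li₂(i)` and `Li₂(-1) = -π²/12`. What remains
follows from `log w + log(1-w) = log(1/2)` and `log w - log(1-w) = log i = iπ/2`.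

Both functional equations are proved along the segment `t = s w`, `0 ≤ s ≤ 1`: the difference of
the two sides is continuous there, vanishes at `0`, and has zero derivative for `0 < s < 1`, where
all dilogarithm arguments lie in the open unit disc and all arguments of `log` that get multiplied
have positive real part, so that no branch correction occurs.
-/

open Complex

/-- The polylogarithm `Li n z = ∑_{k ≥ 1} z^k / k^n`. -/
noncomputable def Li (n : ℕ) (z : ℂ) : ℂ := ∑' k : ℕ, z ^ (k + 1) / ((k + 1 : ℕ) : ℂ) ^ n

/-! ### The dilogarithm on the closed unit disc -/

lemma summable_bound : Summable (fun k : ℕ => 1 / (((k + 1 : ℕ) : ℝ)) ^ 2) :=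
  (summable_nat_add_iff 1).2 (Real.summable_one_div_nat_pow.2 one_lt_two)

lemma norm_term_le {z : ℂ} (hz : ‖z‖ ≤ 1) (k : ℕ) :
    ‖z ^ (k + 1) / ((k + 1 : ℕ) : ℂ) ^ 2‖ ≤ 1 / (((k + 1 : ℕ) : ℝ)) ^ 2 := by
  rw [norm_div, norm_pow, norm_pow, Complex.norm_natCast]
  gcongr
  exact pow_le_one₀ (norm_nonneg _) hz

lemma summable_Li {z : ℂ} (hz : ‖z‖ ≤ 1) :
    Summable (fun k : ℕ => z ^ (k + 1) / ((k + 1 : ℕ) : ℂ) ^ 2) :=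
  Summable.of_norm_bounded summable_bound (norm_term_le hz)

lemma continuousOn_Li : ContinuousOn (Li 2) (Metric.closedBall 0 1) := by
  unfold Li
  refine continuousOn_tsum (fun k => by fun_prop) summable_bound ?_
  intro k z hz
  exact norm_term_le (by simpa using hz) k

lemma hasDerivAt_Li {z : ℂ} (h0 : z ≠ 0) (h1 : ‖z‖ < 1) :
    HasDerivAt (Li 2) (-log (1 - z) / z) z := by
  have hz : z ∈ Metric.ball (0 : ℂ) 1 := by simpa using h1
  have hd : ∀ k : ℕ, DifferentiableOn ℂ
      (fun z : ℂ => z ^ (k + 1) / ((k + 1 : ℕ) : ℂ) ^ 2) (Metric.ball 0 1) :=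
    fun k => by fun_prop
  have hb : ∀ (k : ℕ) (z : ℂ), z ∈ Metric.ball (0 : ℂ) 1 →
      ‖z ^ (k + 1) / ((k + 1 : ℕ) : ℂ) ^ 2‖ ≤ 1 / (((k + 1 : ℕ) : ℝ)) ^ 2 :=
    fun k z hz => norm_term_le (by simpa using (by simpa using hz : ‖z‖ < 1).le) k
  have hdiff : DifferentiableAt ℂ (Li 2) z :=
    (differentiableOn_tsum_of_summable_norm summable_bound hd Metric.isOpen_ball hb).differentiableAt
      (Metric.isOpen_ball.mem_nhds hz)
  have hs := hasSum_deriv_of_summable_norm summable_bound hd Metric.isOpen_ball hb hz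
  have hlog := ((hasSum_nat_add_iff' 1).2 (Complex.hasSum_taylorSeries_neg_log h1)).div_const z
  simp only [Finset.range_one, Finset.sum_singleton, Nat.cast_zero, div_zero, sub_zero] at hlog
  have hterm : (fun k : ℕ => deriv (fun z : ℂ => z ^ (k + 1) / ((k + 1 : ℕ) : ℂ) ^ 2) z) =
      fun k : ℕ => z ^ (k + 1) / ((k + 1 : ℕ) : ℂ) / z := by
    funext k
    have hk : ((k : ℂ) + 1) ≠ 0 := by exact_mod_cast Nat.succ_ne_zero k
    simp
    field_simp
    ring
  have key : deriv (Li 2) z = -log (1 - z) / z := by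
    rw [hterm] at hs
    exact hs.unique hlog
  exact key ▸ hdiff.hasDerivAt

lemma hasDerivAt_Li_comp {u : ℂ → ℂ} {u' t : ℂ} (hu : HasDerivAt u u' t) (h0 : u t ≠ 0)
    (h1 : ‖u t‖ < 1) :
    HasDerivAt (fun t => Li 2 (u t)) (-log (1 - u t) / u t * u') t :=
  (hasDerivAt_Li h0 h1).comp t hu

/-! ### Duplication and special values -/

lemma Li_duplication {z : ℂ} (hz : ‖z‖ ≤ 1) : Li 2 (z ^ 2) = 2 * (Li 2 z + Li 2 (-z)) := by
  have h1 := (summable_Li hz).hasSum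
  have h2 := (summable_Li (z := -z) (by simpa using hz)).hasSum
  have h3 := h1.add h2
  have h4 := (summable_Li (z := z ^ 2)
    (by rw [norm_pow]; exact pow_le_one₀ (norm_nonneg _) hz)).hasSum.div_const 2
  -- the even-indexed terms carry odd powers of `z` and cancel
  have he : HasSum (fun k : ℕ => z ^ (2 * k + 1) / ((2 * k + 1 : ℕ) : ℂ) ^ 2
      + (-z) ^ (2 * k + 1) / ((2 * k + 1 : ℕ) : ℂ) ^ 2) 0 := by
    convert (hasSum_zero : HasSum (fun _ : ℕ => (0 : ℂ)) 0) using 2 with k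
    rw [(odd_two_mul_add_one k).neg_pow]
    ring
  have ho : HasSum (fun k : ℕ => z ^ (2 * k + 1 + 1) / ((2 * k + 1 + 1 : ℕ) : ℂ) ^ 2
      + (-z) ^ (2 * k + 1 + 1) / ((2 * k + 1 + 1 : ℕ) : ℂ) ^ 2) (Li 2 (z ^ 2) / 2) := by
    have hterm : ∀ k : ℕ, z ^ (2 * k + 1 + 1) / ((2 * k + 1 + 1 : ℕ) : ℂ) ^ 2
        + (-z) ^ (2 * k + 1 + 1) / ((2 * k + 1 + 1 : ℕ) : ℂ) ^ 2
        = (z ^ 2) ^ (k + 1) / ((k + 1 : ℕ) : ℂ) ^ 2 / 2 := by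
      intro k
      have hk : ((k : ℂ) + 1) ≠ 0 := by exact_mod_cast Nat.succ_ne_zero k
      have e : 2 * k + 1 + 1 = 2 * (k + 1) := by ring
      rw [e, (even_two_mul (k + 1)).neg_pow, pow_mul]
      push_cast
      field_simp
      norm_num
    simp only [hterm]
    exact h4
  have h5 : Li 2 z + Li 2 (-z) = 0 + Li 2 (z ^ 2) / 2 := h3.unique (HasSum.even_add_odd he ho)
  linear_combination -2 * h5

lemma Li_zero : Li 2 0 = 0 := by simp [Li]

lemma Li_one : Li 2 1 = (Real.pi : ℂ) ^ 2 / 6 := by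
  have h := (hasSum_nat_add_iff' 1).2 hasSum_zeta_two
  have h' := (Complex.hasSum_ofReal.2 h).tsum_eq
  unfold Li
  simpa using h'

lemma Li_neg_one : Li 2 (-1) = -(Real.pi : ℂ) ^ 2 / 12 := by
  have h := Li_duplication (z := 1) (by simp)
  rw [one_pow, Li_one] at h
  linear_combination -h / 2

/-! ### Logarithms in the right half-plane -/

lemma log_mul_of_re_pos {x y : ℂ} (hx : 0 < x.re) (hy : 0 < y.re) :
    log (x * y) = log x + log y := by
  have hx' := abs_lt.1 (abs_arg_lt_pi_div_two_iff.2 (Or.inl hx))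
  have hy' := abs_lt.1 (abs_arg_lt_pi_div_two_iff.2 (Or.inl hy))
  refine log_mul (by rintro rfl; simp at hx) (by rintro rfl; simp at hy) ⟨?_, ?_⟩ <;> linarith

lemma log_inv_of_re_pos {x : ℂ} (hx : 0 < x.re) : log x⁻¹ = -log x := by
  have hx' := abs_lt.1 (abs_arg_lt_pi_div_two_iff.2 (Or.inl hx))
  exact log_inv x (by have := Real.pi_pos; linarith)

lemma log_div_of_re_pos {x y : ℂ} (hx : 0 < x.re) (hy : 0 < y.re) :
    log (x / y) = log x - log y := by
  have hy0 : y ≠ 0 := by rintro rfl; simp at hy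
  have : 0 < (y⁻¹).re := by
    rw [inv_re]; exact div_pos hy (normSq_pos.2 hy0)
  rw [div_eq_mul_inv, log_mul_of_re_pos hx this, log_inv_of_re_pos hy]; ring

/-! ### The segment from `0` to `w` -/

/-- The base of the ladder, `w = (1 + i)/2`. -/
noncomputable def ladderBase : ℂ := (1 + I) / 2

local notation "w" => ladderBase

lemma path_re (s : ℝ) : ((s : ℂ) * w).re = s / 2 := by simp [ladderBase]; ring

lemma path_im (s : ℝ) : ((s : ℂ) * w).im = s / 2 := by simp [ladderBase]; ring

/-- A function with zero derivative on the open segment from `0` to `w`, continuous along the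
closed one, takes the same value at both ends. -/
lemma eq_of_deriv_zero (F : ℂ → ℂ) (hc : ContinuousOn (fun s : ℝ => F (s * w)) (Set.Icc 0 1))
    (hd : ∀ s ∈ Set.Ioo (0 : ℝ) 1, HasDerivAt F 0 (s * w)) : F w = F 0 := by
  have h := intervalIntegral.integral_eq_sub_of_hasDerivAt_of_le (f' := fun _ => (0 : ℂ))
    zero_le_one hc ?_ (by simp)
  · simp at h
    exact sub_eq_zero.1 h.symm
  · intro s hs
    have h1 : HasDerivAt (fun s : ℂ => s * w) w (s : ℂ) := by
      simpa using (hasDerivAt_id (s : ℂ)).mul_const w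
    have h2 := ((hd s hs).comp (s : ℂ) h1).comp_ofReal
    simpa using h2

section segment

variable {s : ℝ}

lemma one_sub_re_pos (h1 : s ≤ 1) : 0 < (1 - (s : ℂ) * w).re := by
  rw [sub_re, path_re, one_re]; linarith

lemma one_add_re_pos (h0 : 0 ≤ s) : 0 < (1 + (s : ℂ) * w).re := by
  rw [add_re, path_re, one_re]; linarith

lemma quad_re (s : ℝ) : (1 - (s : ℂ) * w + (s * w) ^ 2).re = 1 - s / 2 := by
  rw [add_re, sub_re, path_re, pow_two, mul_re (_ * _), path_re, path_im, one_re]; ring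

lemma quad_im (s : ℝ) : (1 - (s : ℂ) * w + (s * w) ^ 2).im = s ^ 2 / 2 - s / 2 := by
  rw [add_im, sub_im, path_im, pow_two, mul_im (_ * _), path_re, path_im, one_im]; ring

lemma quad_re_pos (h1 : s ≤ 1) : 0 < (1 - (s : ℂ) * w + (s * w) ^ 2).re := by
  rw [quad_re]; linarith

lemma normSq_path (s : ℝ) : normSq ((s : ℂ) * w) = s ^ 2 / 2 := by
  rw [normSq_apply, path_re, path_im]; ring

lemma normSq_one_sub (s : ℝ) : normSq (1 - (s : ℂ) * w) = 1 - s + s ^ 2 / 2 := by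
  rw [normSq_apply, sub_re, sub_im, path_re, path_im, one_re, one_im]; ring

lemma normSq_quad (s : ℝ) : normSq (1 - (s : ℂ) * w + (s * w) ^ 2) =
    s ^ 4 / 4 + (1 - s) * (1 + s ^ 2 / 2) := by
  rw [normSq_apply, quad_re, quad_im]; ring

lemma norm_lt_one_of_normSq {x : ℂ} (h : normSq x < 1) : ‖x‖ < 1 := by
  rw [normSq_eq_norm_sq] at h
  exact (sq_lt_one_iff₀ (norm_nonneg _)).1 h

lemma norm_le_one_of_normSq {x : ℂ} (h : normSq x ≤ 1) : ‖x‖ ≤ 1 := by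
  rw [normSq_eq_norm_sq] at h
  exact (sq_le_one_iff₀ (norm_nonneg _)).1 h

lemma norm_path_lt (h0 : 0 ≤ s) (h1 : s ≤ 1) : ‖(s : ℂ) * w‖ < 1 :=
  norm_lt_one_of_normSq (by rw [normSq_path]; nlinarith)

lemma normSq_landen (s : ℝ) :
    normSq ((s : ℂ) * w / (s * w - 1)) = s ^ 2 / 2 / (1 - s + s ^ 2 / 2) := by
  rw [map_div₀, normSq_path, ← neg_sub 1 ((s : ℂ) * w), normSq_neg, normSq_one_sub]

lemma normSq_arg_one (s : ℝ) :
    normSq (-((s : ℂ) * w * (1 - s * w)) / (1 - s * w + (s * w) ^ 2)) =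
      (s ^ 2 / 2 * (1 - s + s ^ 2 / 2)) / (s ^ 4 / 4 + (1 - s) * (1 + s ^ 2 / 2)) := by
  rw [map_div₀, normSq_neg, map_mul, normSq_path, normSq_one_sub, normSq_quad]

lemma normSq_arg_two (s : ℝ) :
    normSq (((s : ℂ) * w) ^ 2 / (1 - s * w + (s * w) ^ 2)) =
      (s ^ 2 / 2) ^ 2 / (s ^ 4 / 4 + (1 - s) * (1 + s ^ 2 / 2)) := by
  rw [map_div₀, map_pow, normSq_path, normSq_quad]

lemma den_pos (h1 : s ≤ 1) : 0 < s ^ 4 / 4 + (1 - s) * (1 + s ^ 2 / 2) := by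
  rw [← normSq_quad]; exact normSq_pos.2 (ne_zero_of_re_pos (quad_re_pos h1))

end segment

/-! ### Landen's identity and the five-term relation at `w` -/

lemma continuousOn_Li_comp {u : ℝ → ℂ} (hu : ContinuousOn u (Set.Icc 0 1))
    (h : ∀ s ∈ Set.Icc (0 : ℝ) 1, ‖u s‖ ≤ 1) :
    ContinuousOn (fun s => Li 2 (u s)) (Set.Icc 0 1) :=
  continuousOn_Li.comp hu (fun s hs => by simpa using h s hs)

/-- Landen's identity `Li₂(t) + Li₂(t/(t-1)) = -log²(1-t)/2` at `t = w`, where `t/(t-1) = -i`. -/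
lemma landen_at_w : Li 2 w + Li 2 (-I) + log (1 - w) ^ 2 / 2 = 0 := by
  have h := eq_of_deriv_zero
    (fun t => Li 2 t + Li 2 (t / (t - 1)) + log (1 - t) ^ 2 / 2) ?_ ?_
  · have e : w / (w - 1) = -I := by
      have : w - 1 ≠ 0 := by
        intro h; have := congrArg re h; simp [ladderBase] at this; norm_num at this
      rw [div_eq_iff this, ladderBase]
      linear_combination (1 / 2) * I_sq
    simpa [e, Li_zero] using h
  · refine ContinuousOn.add (ContinuousOn.add ?_ ?_) ?_
    · exact continuousOn_Li_comp (by fun_prop) (fun s hs => (norm_path_lt hs.1 hs.2).le)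
    · refine continuousOn_Li_comp (ContinuousOn.div (by fun_prop) (by fun_prop) ?_) ?_
      · intro s hs h
        exact ne_zero_of_re_pos (one_sub_re_pos hs.2) (by linear_combination -h)
      · intro s hs
        refine norm_le_one_of_normSq ?_
        rw [normSq_landen, div_le_one (by nlinarith)]
        linarith [hs.2]
    · refine ContinuousOn.div_const (ContinuousOn.pow (ContinuousOn.clog (by fun_prop) ?_) 2) _
      exact fun s hs => Or.inl (one_sub_re_pos hs.2)
  · intro s hs
    have hp := one_sub_re_pos hs.2.le
    have hlt := norm_path_lt hs.1.le hs.2.le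
    have hn : ‖(s : ℂ) * w / (s * w - 1)‖ < 1 := by
      refine norm_lt_one_of_normSq ?_
      rw [normSq_landen, div_lt_one (by nlinarith [hs.2])]
      linarith [hs.2]
    have ht0 : (s : ℂ) * w ≠ 0 := by
      refine ne_zero_of_re_pos ?_
      rw [path_re]; exact half_pos hs.1
    generalize (s : ℂ) * w = t at *
    have hp0 := ne_zero_of_re_pos hp
    have hm0 : t - 1 ≠ 0 := by intro h; exact hp0 (by linear_combination -h)
    have d1 := hasDerivAt_Li ht0 hlt
    have d2 := hasDerivAt_Li_comp ((hasDerivAt_id t).div ((hasDerivAt_id t).sub_const 1) hm0)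
      (div_ne_zero ht0 hm0) hn
    have d3 := ((((hasDerivAt_id t).const_sub 1).clog (Or.inl hp)).pow 2).div_const 2
    have e : log (1 - t / (t - 1)) = -log (1 - t) := by
      rw [← log_inv_of_re_pos hp]; congr 1; field_simp; ring
    refine ((d1.add d2).add d3).congr_deriv ?_
    simp only [id, Pi.div_apply, e]
    have : t - 1 = -(1 - t) := by ring
    rw [this]
    field_simp
    ring

/-- The five-term relation with `x = -t`, `y = t²` at `t = w`, where `1 - t + t² = 1/2`. -/
lemma five_term_at_w : Li 2 (-w) + Li 2 (w ^ 2) - Li 2 (-w ^ 3) - Li 2 (-1) - Li 2 I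
    + log (1 / 2) * (log (1 - w) - log (1 / 2)) = 0 := by
  have hq : 1 - w + w ^ 2 = 1 / 2 := by
    rw [ladderBase]; linear_combination (1 / 4) * I_sq
  have h := eq_of_deriv_zero
    (fun t => Li 2 (-t) + Li 2 (t ^ 2) - Li 2 (-t ^ 3) - Li 2 (-(t * (1 - t)) / (1 - t + t ^ 2))
      - Li 2 (t ^ 2 / (1 - t + t ^ 2))
      + log (1 - t + t ^ 2) * (log (1 - t) - log (1 - t + t ^ 2))) ?_ ?_
  · have e1 : -(w * (1 - w)) / (1 - w + w ^ 2) = -1 := by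
      rw [hq, ladderBase]; linear_combination (1 / 2) * I_sq
    have e2 : w ^ 2 / (1 - w + w ^ 2) = I := by
      rw [hq, ladderBase]; linear_combination (1 / 2) * I_sq
    beta_reduce at h
    rw [e1, e2, hq] at h
    rw [h]
    simp [Li_zero]
  · refine ContinuousOn.add (ContinuousOn.sub (ContinuousOn.sub (ContinuousOn.sub
      (ContinuousOn.add ?_ ?_) ?_) ?_) ?_) ?_
    · exact continuousOn_Li_comp (by fun_prop)
        (fun s hs => by rw [norm_neg]; exact (norm_path_lt hs.1 hs.2).le)
    · exact continuousOn_Li_comp (by fun_prop) (fun s hs => by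
        rw [norm_pow]; exact pow_le_one₀ (norm_nonneg _) (norm_path_lt hs.1 hs.2).le)
    · exact continuousOn_Li_comp (by fun_prop) (fun s hs => by
        rw [norm_neg, norm_pow]; exact pow_le_one₀ (norm_nonneg _) (norm_path_lt hs.1 hs.2).le)
    · refine continuousOn_Li_comp (ContinuousOn.div (by fun_prop) (by fun_prop) ?_) ?_
      · exact fun s hs => ne_zero_of_re_pos (quad_re_pos hs.2)
      · intro s hs
        refine norm_le_one_of_normSq ?_
        rw [normSq_arg_one, div_le_one (den_pos hs.2)]
        linarith [hs.2]
    · refine continuousOn_Li_comp (ContinuousOn.div (by fun_prop) (by fun_prop) ?_) ?_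
      · exact fun s hs => ne_zero_of_re_pos (quad_re_pos hs.2)
      · intro s hs
        refine norm_le_one_of_normSq ?_
        rw [normSq_arg_two, div_le_one (den_pos hs.2)]
        nlinarith [mul_nonneg (sub_nonneg.2 hs.2) (sq_nonneg s), hs.2]
    · have hD : ContinuousOn (fun s : ℝ => log (1 - (s : ℂ) * w + (s * w) ^ 2)) (Set.Icc 0 1) :=
        ContinuousOn.clog (by fun_prop) (fun s hs => Or.inl (quad_re_pos hs.2))
      refine hD.mul (ContinuousOn.sub (ContinuousOn.clog (by fun_prop) ?_) hD)
      exact fun s hs => Or.inl (one_sub_re_pos hs.2)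
  · intro s hs
    have hm := one_sub_re_pos hs.2.le
    have hp := one_add_re_pos hs.1.le
    have hD := quad_re_pos hs.2.le
    have hlt := norm_path_lt hs.1.le hs.2.le
    have hn1 : ‖-((s : ℂ) * w * (1 - s * w)) / (1 - s * w + (s * w) ^ 2)‖ < 1 := by
      refine norm_lt_one_of_normSq ?_
      rw [normSq_arg_one, div_lt_one (den_pos hs.2.le)]
      linarith [hs.2]
    have hn2 : ‖((s : ℂ) * w) ^ 2 / (1 - s * w + (s * w) ^ 2)‖ < 1 := by
      refine norm_lt_one_of_normSq ?_
      rw [normSq_arg_two, div_lt_one (den_pos hs.2.le)]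
      nlinarith [mul_nonneg (sub_nonneg.2 hs.2.le) (sq_nonneg s), hs.2]
    have ht0 : (s : ℂ) * w ≠ 0 := by
      refine ne_zero_of_re_pos ?_
      rw [path_re]; exact half_pos hs.1
    generalize (s : ℂ) * w = t at *
    have hm0 := ne_zero_of_re_pos hm
    have hD0 := ne_zero_of_re_pos hD
    have dD : HasDerivAt (fun t : ℂ => 1 - t + t ^ 2) (-1 + 2 * t) t := by
      exact (((hasDerivAt_id t).const_sub 1).add (hasDerivAt_pow 2 t)).congr_deriv (by simp)
    have dm : HasDerivAt (fun t : ℂ => 1 - t) (-1) t := (hasDerivAt_id t).const_sub 1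
    have dsq : HasDerivAt (fun t : ℂ => t ^ 2) (2 * t) t := by simpa using hasDerivAt_pow 2 t
    have dcu : HasDerivAt (fun t : ℂ => -t ^ 3) (-(3 * t ^ 2)) t := by
      exact (hasDerivAt_pow 3 t).neg.congr_deriv (by simp)
    have dx : HasDerivAt (fun t : ℂ => -(t * (1 - t))) (-(1 - 2 * t)) t := by
      refine ((hasDerivAt_id t).mul dm).neg.congr_deriv ?_
      simp only [id]; ring
    have d1 := hasDerivAt_Li_comp (hasDerivAt_neg t) (neg_ne_zero.2 ht0) (by rwa [norm_neg])
    have d2 := hasDerivAt_Li_comp dsq (pow_ne_zero 2 ht0)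
      (by rw [norm_pow]; exact pow_lt_one₀ (norm_nonneg _) hlt two_ne_zero)
    have d3 := hasDerivAt_Li_comp dcu (neg_ne_zero.2 (pow_ne_zero 3 ht0))
      (by rw [norm_neg, norm_pow]; exact pow_lt_one₀ (norm_nonneg _) hlt three_ne_zero)
    have d4 := hasDerivAt_Li_comp (dx.fun_div dD hD0)
      (div_ne_zero (neg_ne_zero.2 (mul_ne_zero ht0 hm0)) hD0) hn1
    have d5 := hasDerivAt_Li_comp (dsq.fun_div dD hD0) (div_ne_zero (pow_ne_zero 2 ht0) hD0) hn2
    have dlD := dD.clog (Or.inl hD)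
    have dlm := dm.clog (Or.inl hm)
    have l1 : log (1 - -t) = log (1 + t) := by rw [sub_neg_eq_add]
    have l2 : log (1 - t ^ 2) = log (1 - t) + log (1 + t) := by
      rw [← log_mul_of_re_pos hm hp]; congr 1; ring
    have l3 : log (1 - -t ^ 3) = log (1 + t) + log (1 - t + t ^ 2) := by
      rw [← log_mul_of_re_pos hp hD]; congr 1; ring
    have l4 : log (1 - -(t * (1 - t)) / (1 - t + t ^ 2)) = -log (1 - t + t ^ 2) := by
      rw [← log_inv_of_re_pos hD]; congr 1; field_simp; ring
    have l5 : log (1 - t ^ 2 / (1 - t + t ^ 2)) = log (1 - t) - log (1 - t + t ^ 2) := by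
      rw [← log_div_of_re_pos hm hD]; congr 1; field_simp; ring
    refine (((((d1.add d2).sub d3).sub d4).sub d5).add (dlD.mul (dlm.sub dlD))).congr_deriv ?_
    rw [l1, l2, l3, l4, l5]
    simp only [Pi.sub_apply]
    generalize log (1 - t + t ^ 2) = d
    generalize log (1 - t) = a
    generalize log (1 + t) = b
    field_simp
    ring

/-! ### The ladder relation -/

theorem dilog_ladder_p3 :
    2 * Li 2 ((1 - I) / 4) =
      3 * (Li 2 (I / 2) - (Complex.log ((1 + I) / 2)) ^ 2) + 4 * Li 2 (-I) := by
  have hw : (1 + I) / 2 = w := rfl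
  have e2 : I / 2 = w ^ 2 := by rw [ladderBase]; linear_combination (-1 / 4) * I_sq
  have e3 : (1 - I) / 4 = -w ^ 3 := by
    rw [ladderBase]; linear_combination (1 / 8) * (3 + I) * I_sq
  have hnw : ‖w‖ ≤ 1 := by simpa using (norm_path_lt (s := 1) (by norm_num) le_rfl).le
  have hwre : 0 < (w).re := by simp [ladderBase]
  have hwre' : 0 < (1 - w).re := by simpa using one_sub_re_pos (s := 1) le_rfl
  have hw0 := ne_zero_of_re_pos hwre'
  have A := landen_at_w
  have B := five_term_at_w
  have C := Li_duplication hnw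
  have D := Li_duplication (z := I) (by simp)
  rw [I_sq] at D
  have E := Li_neg_one
  have hs : log (1 / 2) = log w + log (1 - w) := by
    rw [← log_mul_of_re_pos hwre hwre']; congr 1
    rw [ladderBase]; linear_combination (1 / 4) * I_sq
  have hdiff : log w - log (1 - w) = Real.pi / 2 * I := by
    rw [← log_div_of_re_pos hwre hwre', ← log_I]; congr 1
    rw [div_eq_iff hw0, ladderBase]; linear_combination (1 / 2) * I_sq
  rw [e2, e3, hw]
  rw [hs] at B
  have hb : log (1 - w) = log w - Real.pi / 2 * I := by linear_combination -hdiff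
  rw [hb] at A B
  linear_combination -2 * B - C - 2 * A + D - 3 * E + (Real.pi : ℂ) ^ 2 / 4 * I_sq
end

section
/- Catalan's constant satisfies G = ∑_{n=1}^∞ [ (1/2)^{2n+1} / (2n+1) ] · C(2n, n) · H_{2n}, where C(2n,n) is the central binomial coefficient and H_{2n} = ∑_{m=1}^{2n} 1/m is the 2n-th harmonic number. -/
/-!
The proof evaluates one logarithmic integral in two ways.

Since `∫₀¹ x ^ (2n) * log (x / (1 - x)) dx = H_{2n} / (2n + 1)`, the substitution `x = sin θ` and the
generating function `∑ C(2n, n) / 4 ^ n * x ^ (2n) = 1 / √(1 - x²)` give (`hasSum_L`)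
`∑ C(2n, n) / 4 ^ n * H_{2n} / (2n + 1) = ∫ log (sin θ / (1 - sin θ))` over `[0, π / 2]`.
The integrals of `log (1 - sin θ)` and `log (1 - cos θ)` agree by reflection, and
`sin θ / (1 - cos θ) = 1 / tan (θ / 2)`, so this integral is `2 ∫ -log (tan u)` over `[0, π / 4]`
(`integral_L`). Expanding `cos² u = 1 / (1 + tan² u)` as a geometric series and integrating term by
term identifies the last integral with Catalan's constant (`hasSum_tan`). The series of the theorem
is one half of the first one.
-/

/-- Catalan's constant. -/
noncomputable def catalan' : ℝ := ∑' k : ℕ, (-1 : ℝ) ^ k / ((2 * k + 1 : ℕ) : ℝ) ^ 2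

open Real intervalIntegral MeasureTheory

/-! ### The generating function of the central binomial coefficients -/

/-- The coefficients of the binomial series of `(1 - x) ^ (-1 / 2)`: both sides are
`1 / n!` times the rising factorial of `1 / 2`. -/
lemma ring_choose_half (n : ℕ) :
    Ring.choose ((1 / 2 : ℝ) + n - 1) n = (Nat.centralBinom n : ℝ) / 4 ^ n := by
  rw [← Ring.multichoose_eq]
  have key : ∀ m : ℕ, (ascPochhammer ℝ m).eval (1 / 2 : ℝ)
      = (m.factorial : ℝ) * ((Nat.centralBinom m : ℝ) / 4 ^ m) := by
    intro m
    induction m with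
    | zero => simp
    | succ m ih =>
      have h : ((m : ℝ) + 1) * (Nat.centralBinom (m + 1) : ℝ)
          = 2 * (2 * m + 1) * Nat.centralBinom m := by
        exact_mod_cast Nat.succ_mul_centralBinom_succ m
      rw [ascPochhammer_succ_eval, ih, Nat.factorial_succ, pow_succ]
      push_cast
      field_simp
      linear_combination (-2) * h
  have h := Ring.factorial_nsmul_multichoose_eq_ascPochhammer (1 / 2 : ℝ) n
  rw [Polynomial.ascPochhammer_smeval_eq_eval, key, nsmul_eq_mul] at h
  exact mul_left_cancel₀ (by exact_mod_cast n.factorial_ne_zero) h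

lemma hasSum_centralBinom {x : ℝ} (hx : |x| < 1) :
    HasSum (fun n : ℕ => (Nat.centralBinom n : ℝ) / 4 ^ n * x ^ n) (1 / √(1 - x)) := by
  have h := (Real.one_div_one_sub_rpow_hasFPowerSeriesOnBall_zero (1 / 2)).hasSum
    (y := x) (by simpa [enorm_eq_nnnorm, ← NNReal.coe_lt_coe] using hx)
  simp only [FormalMultilinearSeries.ofScalars_apply_eq, ring_choose_half, zero_add,
    smul_eq_mul] at h
  rw [Real.sqrt_eq_rpow]
  exact h

/-! ### The harmonic sum as a logarithmic integral -/

/-- An antiderivative of `x ^ p * (log x - log (1 - x))` on `(0, 1)`. The logarithms occur only in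
the combinations `x * log x` and `(1 - x) * log (1 - x)`, so that the function is continuous up to
the endpoints; the geometric sum is `(1 - x ^ (p + 1)) / (1 - x)`. -/
noncomputable def logPrim (p : ℕ) (x : ℝ) : ℝ :=
  (x ^ p * (x * log x) + (∑ m ∈ Finset.range (p + 1), x ^ m) * ((1 - x) * log (1 - x))
    + ∑ m ∈ Finset.range (p + 1), x ^ (m + 1) / ((m : ℝ) + 1) - x ^ (p + 1) / ((p : ℝ) + 1))
    / ((p : ℝ) + 1)

lemma continuous_logPrim (p : ℕ) : Continuous (logPrim p) := by
  have h1 := Real.continuous_mul_log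
  have h2 : Continuous fun x : ℝ => (1 - x) * log (1 - x) :=
    h1.comp (continuous_const.sub continuous_id)
  unfold logPrim
  fun_prop

lemma hasDerivAt_logPrim (p : ℕ) {x : ℝ} (h0 : 0 < x) (h1 : x < 1) :
    HasDerivAt (logPrim p) (x ^ p * (log x - log (1 - x))) x := by
  have e : logPrim p = fun x => (x ^ (p + 1) * log x + (1 - x ^ (p + 1)) * log (1 - x)
    + ∑ m ∈ Finset.range (p + 1), x ^ (m + 1) / ((m : ℝ) + 1) - x ^ (p + 1) / ((p : ℝ) + 1))
    / ((p : ℝ) + 1) := by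
    ext x
    rw [logPrim, ← geom_sum_mul_neg]
    ring
  have hx : (1 : ℝ) - x ≠ 0 := by linarith
  have hp : (p : ℝ) + 1 ≠ 0 := by positivity
  have d1 : HasDerivAt (fun x : ℝ => x ^ (p + 1)) (((p : ℝ) + 1) * x ^ p) x := by
    simpa using hasDerivAt_pow (p + 1) x
  have d2 : HasDerivAt (fun x : ℝ => log (1 - x)) (-1 / (1 - x)) x :=
    ((hasDerivAt_id x).const_sub 1).log hx
  have d3 : HasDerivAt (fun x : ℝ => ∑ m ∈ Finset.range (p + 1), x ^ (m + 1) / ((m : ℝ) + 1))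
      (∑ m ∈ Finset.range (p + 1), x ^ m) x := by
    refine HasDerivAt.fun_sum fun m _ => ?_
    have hm : (m : ℝ) + 1 ≠ 0 := by positivity
    convert! (hasDerivAt_pow (m + 1) x).div_const ((m : ℝ) + 1) using 1
    push_cast
    field_simp
  rw [e]
  convert! ((((d1.mul (Real.hasDerivAt_log h0.ne')).add ((d1.const_sub 1).mul d2)).add d3).sub
    (d1.div_const ((p : ℝ) + 1))).div_const ((p : ℝ) + 1) using 1
  have g : (1 - x ^ (p + 1)) * (-1 / (1 - x)) = -∑ m ∈ Finset.range (p + 1), x ^ m := by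
    rw [← geom_sum_mul_neg]
    field_simp
  rw [g]
  field_simp
  ring

lemma logPrim_one_sub_zero (p : ℕ) : logPrim p 1 - logPrim p 0
    = (∑ m ∈ Finset.range p, (1 : ℝ) / ((m + 1 : ℕ) : ℝ)) / ((p : ℝ) + 1) := by
  simp [logPrim, Finset.sum_range_succ]

lemma intervalIntegrable_log_one_sub_sin (a b : ℝ) :
    IntervalIntegrable (fun θ => log (1 - sin θ)) volume a b := by
  apply MeromorphicOn.intervalIntegrable_log (f := fun θ => 1 - sin θ)
  apply AnalyticOnNhd.meromorphicOn
  intro x _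
  fun_prop

lemma intervalIntegrable_log_one_sub_cos (a b : ℝ) :
    IntervalIntegrable (fun θ => log (1 - cos θ)) volume a b := by
  apply MeromorphicOn.intervalIntegrable_log (f := fun θ => 1 - cos θ)
  apply AnalyticOnNhd.meromorphicOn
  intro x _
  fun_prop

lemma intervalIntegrable_L (a b : ℝ) :
    IntervalIntegrable (fun θ => log (sin θ) - log (1 - sin θ)) volume a b :=
  intervalIntegrable_log_sin.sub (intervalIntegrable_log_one_sub_sin a b)

lemma sin_lt_one_of {θ : ℝ} (h0 : 0 < θ) (h1 : θ < π / 2) : sin θ < 1 := by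
  have := Real.sin_lt_sin_of_lt_of_le_pi_div_two (by linarith) le_rfl h1
  simpa using this

/-- The integral `∫ x ^ p * (log x - log (1 - x))` over `[0, 1]` after `x = sin θ`; its value is
`H_p / (p + 1)`. -/
lemma integral_sin_pow_mul_cos_mul_log (p : ℕ) :
    ∫ θ in (0 : ℝ)..(π / 2), sin θ ^ p * cos θ * (log (sin θ) - log (1 - sin θ))
      = (∑ m ∈ Finset.range p, (1 : ℝ) / ((m + 1 : ℕ) : ℝ)) / ((p : ℝ) + 1) := by
  have h := integral_eq_sub_of_hasDerivAt_of_le (f := fun θ => logPrim p (sin θ))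
    (f' := fun θ => sin θ ^ p * cos θ * (log (sin θ) - log (1 - sin θ)))
    (a := 0) (b := π / 2) (by positivity)
    ((continuous_logPrim p).comp continuous_sin).continuousOn
    (by
      intro θ hθ
      have := (hasDerivAt_logPrim p (sin_pos_of_pos_of_lt_pi hθ.1 (by linarith [hθ.2, pi_pos]))
        (sin_lt_one_of hθ.1 hθ.2)).comp θ (hasDerivAt_sin θ)
      convert! this using 1
      ring)
    ((intervalIntegrable_L _ _).continuousOn_mul
      (g := fun θ => sin θ ^ p * cos θ) (by fun_prop))
  rw [h]
  simpa using logPrim_one_sub_zero p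

/-- Integration of `1 = ∑ C(2n, n) / 4 ^ n * sin θ ^ (2n) * cos θ` against
`log (sin θ) - log (1 - sin θ)`. The coefficients are nonnegative, so the partial sums are dominated
by the absolute value of this integrable function. -/
lemma hasSum_L : HasSum (fun n : ℕ => (Nat.centralBinom n : ℝ) / 4 ^ n *
      ((∑ m ∈ Finset.range (2 * n), (1 : ℝ) / ((m + 1 : ℕ) : ℝ)) / (((2 * n : ℕ) : ℝ) + 1)))
    (∫ θ in (0 : ℝ)..(π / 2), (log (sin θ) - log (1 - sin θ))) := by
  simp only [← integral_sin_pow_mul_cos_mul_log, ← intervalIntegral.integral_const_mul]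
  have hL := intervalIntegrable_L 0 (π / 2)
  have hpt : ∀ᵐ θ : ℝ, θ ∈ Set.uIoc 0 (π / 2) →
      HasSum (fun n : ℕ => (Nat.centralBinom n : ℝ) / 4 ^ n * (sin θ ^ (2 * n) * cos θ)) 1 := by
    -- At `θ = π / 2` the series sums to `0`, so that point is discarded.
    filter_upwards [compl_mem_ae_iff.mpr (measure_singleton (π / 2))] with θ hne hθ
    rw [Set.uIoc_of_le (by positivity)] at hθ
    have hlt : θ < π / 2 := lt_of_le_of_ne hθ.2 hne
    have hc : 0 < cos θ := cos_pos_of_mem_Ioo ⟨by linarith [hθ.1, pi_pos], hlt⟩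
    have hs : |sin θ ^ 2| < 1 := by
      rw [abs_of_nonneg (sq_nonneg _), sin_sq]
      nlinarith
    have := (hasSum_centralBinom hs).mul_right (cos θ)
    rw [← cos_sq', sqrt_sq hc.le, one_div_mul_cancel hc.ne'] at this
    simpa only [← pow_mul, mul_assoc] using this
  refine intervalIntegral.hasSum_integral_of_dominated_convergence
    (fun n θ => (Nat.centralBinom n : ℝ) / 4 ^ n * (sin θ ^ (2 * n) * cos θ) *
      |log (sin θ) - log (1 - sin θ)|) ?_ ?_ ?_ ?_ ?_
  · intro n
    fun_prop
  · intro n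
    refine .of_forall fun θ hθ => ?_
    rw [Set.uIoc_of_le (by positivity)] at hθ
    have hc : 0 ≤ cos θ := cos_nonneg_of_mem_Icc ⟨by linarith [hθ.1, pi_pos], hθ.2⟩
    have hs : 0 ≤ sin θ ^ (2 * n) := by rw [pow_mul]; positivity
    rw [← mul_assoc, norm_mul, norm_eq_abs, norm_eq_abs, abs_of_nonneg (by positivity)]
  · filter_upwards [hpt] with θ h hθ
    exact ((h hθ).mul_right _).summable
  · refine hL.abs.congr_ae ?_
    rw [Filter.EventuallyEq, ae_restrict_iff' measurableSet_uIoc]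
    filter_upwards [hpt] with θ h hθ
    simpa using ((h hθ).mul_right _).tsum_eq.symm
  · filter_upwards [hpt] with θ h hθ
    simpa only [mul_assoc, one_mul] using
      (h hθ).mul_right (log (sin θ) - log (1 - sin θ))

/-- The reflection `θ ↦ π / 2 - θ` replaces `1 - sin θ` by `1 - cos θ`, and
`sin θ / (1 - cos θ) = 1 / tan (θ / 2)`. -/
lemma integral_L : ∫ θ in (0 : ℝ)..(π / 2), (log (sin θ) - log (1 - sin θ))
    = 2 * ∫ u in (0 : ℝ)..(π / 4), -log (tan u) := by
  have hA : ∫ θ in (0 : ℝ)..(π / 2), log (1 - sin θ)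
      = ∫ θ in (0 : ℝ)..(π / 2), log (1 - cos θ) := by
    have := integral_comp_sub_left (fun θ => log (1 - cos θ)) (a := 0) (b := π / 2) (π / 2)
    simpa [cos_pi_div_two_sub] using this
  have hI : IntervalIntegrable (fun θ => log (sin θ)) volume 0 (π / 2) := intervalIntegrable_log_sin
  rw [integral_sub hI (intervalIntegrable_log_one_sub_sin _ _), hA,
    ← integral_sub hI (intervalIntegrable_log_one_sub_cos _ _)]
  have h2 := integral_comp_div (fun u => -log (tan u)) (a := 0) (b := π / 2) (two_ne_zero' ℝ)
  rw [zero_div, show π / 2 / 2 = π / 4 by ring, smul_eq_mul] at h2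
  rw [← h2]
  refine integral_congr_Ioo_of_le (by positivity) fun θ hθ => ?_
  have hs : 0 < sin (θ / 2) :=
    sin_pos_of_pos_of_lt_pi (by linarith [hθ.1]) (by linarith [hθ.2, pi_pos])
  have hc : 0 < cos (θ / 2) :=
    cos_pos_of_mem_Ioo ⟨by linarith [hθ.1, pi_pos], by linarith [hθ.2, pi_pos]⟩
  have e1 : sin θ = 2 * sin (θ / 2) * cos (θ / 2) := by
    rw [← sin_two_mul]; ring_nf
  have e2 : 1 - cos θ = 2 * sin (θ / 2) * sin (θ / 2) := by
    have : cos θ = cos (2 * (θ / 2)) := by ring_nf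
    rw [this, cos_two_mul']
    linear_combination (-1 : ℝ) * sin_sq_add_cos_sq (θ / 2)
  have hs2 : 2 * sin (θ / 2) ≠ 0 := by positivity
  rw [e1, e2, log_mul hs2 hc.ne', log_mul hs2 hs.ne', tan_eq_sin_div_cos,
    log_div hs.ne' hc.ne']
  ring

/-! ### Catalan's constant as a logarithmic integral -/

lemma tan_mem {u : ℝ} (h0 : 0 < u) (h1 : u < π / 4) : 0 < tan u ∧ tan u < 1 := by
  refine ⟨tan_pos_of_pos_of_lt_pi_div_two h0 (by linarith [pi_pos]), ?_⟩
  rw [← tan_pi_div_four]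
  exact tan_lt_tan_of_lt_of_lt_pi_div_two (by linarith [pi_pos]) (by linarith [pi_pos]) h1

lemma cos_ne_zero_of_mem {u : ℝ} (hu : u ∈ Set.Icc 0 (π / 4)) : cos u ≠ 0 :=
  (cos_pos_of_mem_Ioo ⟨by linarith [hu.1, pi_pos], by linarith [hu.2, pi_pos]⟩).ne'

lemma continuousOn_tan' : ContinuousOn tan (Set.Icc 0 (π / 4)) := fun _ hu =>
  (continuousAt_tan.mpr (cos_ne_zero_of_mem hu)).continuousWithinAt

lemma intervalIntegrable_log_tan :
    IntervalIntegrable (fun u => -log (tan u)) volume 0 (π / 4) := by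
  refine (intervalIntegrable_log_cos.sub intervalIntegrable_log_sin).congr ?_
  intro u hu
  rw [Set.uIoc_of_le (by positivity)] at hu
  have hs : 0 < sin u := sin_pos_of_pos_of_lt_pi hu.1 (by linarith [hu.2, pi_pos])
  have hc := cos_ne_zero_of_mem ⟨hu.1.le, hu.2⟩
  simp [tan_eq_sin_div_cos, log_div hs.ne' hc]

lemma intervalIntegrable_tan_pow (p : ℕ) :
    IntervalIntegrable (fun u => tan u ^ p * (1 / cos u ^ 2) * -log (tan u)) volume 0 (π / 4) := by
  refine intervalIntegrable_log_tan.continuousOn_mul ?_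
  rw [Set.uIcc_of_le (by positivity)]
  refine (continuousOn_tan'.pow p).mul (continuousOn_const.div (by fun_prop) fun u hu => ?_)
  exact pow_ne_zero 2 (cos_ne_zero_of_mem hu)

/-- The integral `∫ t ^ p * (-log t)` over `[0, 1]` after `t = tan u`. -/
lemma integral_tan_pow (p : ℕ) :
    ∫ u in (0 : ℝ)..(π / 4), tan u ^ p * (1 / cos u ^ 2) * -log (tan u)
      = 1 / ((p : ℝ) + 1) ^ 2 := by
  have hp : (p : ℝ) + 1 ≠ 0 := by positivity
  have h := integral_eq_sub_of_hasDerivAt_of_le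
    (f := fun u => tan u ^ (p + 1) / ((p : ℝ) + 1) ^ 2
      - tan u ^ p * (tan u * log (tan u)) / ((p : ℝ) + 1))
    (f' := fun u => tan u ^ p * (1 / cos u ^ 2) * -log (tan u))
    (a := 0) (b := π / 4) (by positivity)
    (by
      have h1 := continuousOn_tan'
      have h2 := Real.continuous_mul_log.comp_continuousOn h1
      exact ((h1.pow _).div_const _).sub (((h1.pow _).mul h2).div_const _))
    (by
      intro u hu
      have ht := (tan_mem hu.1 hu.2).1
      have hd := hasDerivAt_tan (cos_ne_zero_of_mem ⟨hu.1.le, hu.2.le⟩)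
      have hg : HasDerivAt (fun t : ℝ => t ^ (p + 1) / ((p : ℝ) + 1) ^ 2
          - t ^ p * (t * log t) / ((p : ℝ) + 1)) (tan u ^ p * -log (tan u)) (tan u) := by
        have e : (fun t : ℝ => t ^ (p + 1) / ((p : ℝ) + 1) ^ 2
            - t ^ p * (t * log t) / ((p : ℝ) + 1)) = fun t : ℝ =>
            t ^ (p + 1) / ((p : ℝ) + 1) ^ 2 - t ^ (p + 1) * log t / ((p : ℝ) + 1) := by
          ext t; ring
        have d1 : HasDerivAt (fun x : ℝ => x ^ (p + 1)) (((p : ℝ) + 1) * tan u ^ p) (tan u) := by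
          simpa using hasDerivAt_pow (p + 1) (tan u)
        rw [e]
        convert! (d1.div_const _).sub ((d1.mul (Real.hasDerivAt_log ht.ne')).div_const _) using 1
        field_simp
        ring
      convert! hg.comp u hd using 1
      ring)
    (intervalIntegrable_tan_pow p)
  rw [h]
  simp

/-- Integration of `1 = ∑ (-1) ^ k * tan u ^ (2k) / cos u ^ 2` against `-log (tan u)`; the
integrals of the absolute values of the terms are `1 / (2k + 1) ^ 2`, which are summable. -/
lemma hasSum_tan : HasSum (fun k : ℕ => (-1 : ℝ) ^ k / ((2 * k + 1 : ℕ) : ℝ) ^ 2)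
    (∫ u in (0 : ℝ)..(π / 4), -log (tan u)) := by
  set F : ℕ → ℝ → ℝ := fun k u =>
    (-1) ^ k * (tan u ^ (2 * k) * (1 / cos u ^ 2) * -log (tan u)) with hF
  have hle : (0 : ℝ) ≤ π / 4 := by positivity
  have hint : ∀ k, ∫ u in Set.Ioo 0 (π / 4), F k u = (-1 : ℝ) ^ k / ((2 * k + 1 : ℕ) : ℝ) ^ 2 := by
    intro k
    rw [← integral_Ioc_eq_integral_Ioo, ← integral_of_le hle, hF]
    simp only
    rw [intervalIntegral.integral_const_mul, integral_tan_pow]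
    push_cast
    ring
  have hnorm : ∀ k, ∫ u in Set.Ioo 0 (π / 4), ‖F k u‖ = 1 / ((2 * k + 1 : ℕ) : ℝ) ^ 2 := by
    intro k
    have : ∫ u in Set.Ioo 0 (π / 4), ‖F k u‖ = ∫ u in Set.Ioo 0 (π / 4),
        tan u ^ (2 * k) * (1 / cos u ^ 2) * -log (tan u) := by
      refine setIntegral_congr_fun measurableSet_Ioo fun u hu => ?_
      have ht := tan_mem hu.1 hu.2
      have hl : 0 ≤ -log (tan u) := by linarith [log_nonpos ht.1.le ht.2.le]
      have ht0 := ht.1.le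
      simp only [hF, norm_mul, norm_pow, norm_neg, norm_one, one_pow, one_mul]
      rw [← norm_neg (log _), ← norm_pow, ← norm_mul, ← norm_mul, norm_of_nonneg (by positivity)]
    rw [this, ← integral_Ioc_eq_integral_Ioo, ← integral_of_le hle, integral_tan_pow]
    push_cast
    ring
  have hsum : Summable fun k : ℕ => 1 / ((2 * k + 1 : ℕ) : ℝ) ^ 2 :=
    (Real.summable_one_div_nat_pow.mpr one_lt_two).comp_injective
      (i := fun k : ℕ => 2 * k + 1) (fun a b h => by simpa using h)
  have hFint : ∀ k, Integrable (F k) (volume.restrict (Set.Ioo 0 (π / 4))) := fun k =>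
    (((intervalIntegrable_iff_integrableOn_Ioo_of_le hle).mp
      (intervalIntegrable_tan_pow (2 * k))).const_mul _)
  have h := hasSum_integral_of_summable_integral_norm hFint (by simpa only [hnorm] using hsum)
  simp only [hint] at h
  convert! h using 1
  rw [integral_of_le hle, integral_Ioc_eq_integral_Ioo]
  refine setIntegral_congr_fun measurableSet_Ioo fun u hu => ?_
  have ht := tan_mem hu.1 hu.2
  have hc := cos_ne_zero_of_mem ⟨hu.1.le, hu.2.le⟩
  have hg := (hasSum_geometric_of_abs_lt_one (r := -tan u ^ 2) (by
    rw [abs_neg, abs_of_nonneg (sq_nonneg _)]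
    nlinarith)).mul_right (1 / cos u ^ 2 * -log (tan u))
  have e : (1 - -tan u ^ 2)⁻¹ = cos u ^ 2 := by
    rw [sub_neg_eq_add, inv_one_add_tan_sq hc]
  rw [e] at hg
  have e2 : cos u ^ 2 * (1 / cos u ^ 2 * -log (tan u)) = -log (tan u) := by
    field_simp
  rw [e2] at hg
  rw [← hg.tsum_eq]
  refine tsum_congr fun k => ?_
  simp only [hF]
  rw [neg_pow, pow_mul]
  ring

/-! ### The identity -/

theorem catalan_central_binomial :
    catalan' = ∑' n : ℕ,
      ((1 / 2 : ℝ) ^ (2 * (n + 1) + 1) / ((2 * (n + 1) + 1 : ℕ) : ℝ)) *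
        (Nat.choose (2 * (n + 1)) (n + 1) : ℝ) *
        ∑ m ∈ Finset.range (2 * (n + 1)), (1 : ℝ) / ((m + 1 : ℕ) : ℝ) := by
  have h := hasSum_L.mul_left (1 / 2)
  -- The term with `n = 0` vanishes because `H_0 = 0`.
  rw [integral_L, ← hasSum_nat_add_iff' 1] at h
  rw [catalan', hasSum_tan.tsum_eq]
  have h' := h.tsum_eq
  simp only [Finset.range_one, Finset.sum_singleton, mul_zero, Finset.range_zero,
    Finset.sum_empty, zero_div, sub_zero] at h'
  rw [← mul_assoc, one_div_mul_cancel two_ne_zero, one_mul] at h'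
  rw [← h']
  refine tsum_congr fun n => ?_
  have h4 : (1 / 2 : ℝ) ^ (2 * (n + 1) + 1) = 1 / 4 ^ (n + 1) * (1 / 2) := by
    rw [pow_succ, pow_mul, show ((1 / 2 : ℝ) ^ 2) = 1 / 4 by norm_num, one_div_pow]
  rw [Nat.centralBinom, h4]
  push_cast
  field_simp
end
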